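/- arXiv:2408.03226 — 2 statements merged into one kernel-verified Lean document; each statement's English description precedes it below -/
import Mathlib

section
/- Every discrete subgroup of the additive group of a normed space is a free Abelian group. Precisely: if X is a real normed vector space and A is an additive subgroup of X which is discrete in the norm topology (equivalently, there exists δ > 0 such that ‖a‖ ≥ δ for every nonzero a ∈ A), then A is a free ℤ-module. -/
open Cardinal in
theorem Submodule.cardinalMk_span_int_le_max {M : Type*} [AddCommGroup M] (s : Set M) :
    #(span ℤ s) ≤ max #s ℵ₀ := by
  have hsurj : Function.Surjective
      (Finsupp.linearCombination ℤ (Subtype.val : s → M)).rangeRestrict :=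
    LinearMap.surjective_rangeRestrict _
  have hrange : (Finsupp.linearCombination ℤ (Subtype.val : s → M)).range = span ℤ s := by
    rw [Finsupp.range_linearCombination, Subtype.range_coe]
  have hle := mk_le_of_surjective hsurj
  rw [hrange] at hle
  refine hle.trans ?_
  rcases isEmpty_or_nonempty s with h | h
  · exact (mk_le_aleph0 (α := s →₀ ℤ)).trans (le_max_right _ _)
  · simp

/-- A module exhausted by a well-ordered chain of submodules with free successive quotients is
free. The quotient of `N i` by the union of the preceding members is presented as the image of
`N i` under a linear map `f i`. -/
theorem Module.Free.iSup_of_wellOrdered_filtration {R M ι : Type*} [Ring R] [AddCommGroup M]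
    [Module R M] [LinearOrder ι] [WellFoundedLT ι] (N : ι → Submodule R M) {P : ι → Type*}
    [∀ i, AddCommGroup (P i)] [∀ i, Module R (P i)] (f : ∀ i, M →ₗ[R] P i)
    (hker : ∀ i, ∀ x ∈ N i, f i x = 0 → x ∈ ⨆ j : Set.Iio i, N j)
    (hlt : ∀ i j, j < i → N j ≤ LinearMap.ker (f i))
    (hfree : ∀ i, Module.Free R ((N i).map (f i))) :
    Module.Free R (⨆ i, N i : Submodule R M) := by
  classical
  let b i := Module.Free.chooseBasis R ((N i).map (f i))
  have hlift (i) (k) : ∃ x ∈ N i, f i x = b i k := (b i k).2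
  choose v hvN hvf using hlift
  let w : (Σ i, Module.Free.ChooseBasisIndex R ((N i).map (f i))) → M := fun p => v p.1 p.2
  have hli : LinearIndependent R w := by
    rw [linearIndependent_iff']
    intro s g hg
    by_contra! hne
    let t := (s.filter (fun p => g p ≠ 0)).image Sigma.fst
    have ht : t.Nonempty := by
      obtain ⟨p, hp, hgp⟩ := hne
      exact ⟨p.1, Finset.mem_image_of_mem _ (Finset.mem_filter.2 ⟨hp, hgp⟩)⟩
    obtain ⟨i, hit, hmax⟩ := t.exists_max_image id ht
    obtain ⟨p, hp, rfl⟩ := Finset.mem_image.1 hit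
    obtain ⟨hps, hgp⟩ := Finset.mem_filter.1 hp
    obtain ⟨i, k⟩ := p
    have hbi : LinearIndependent R (fun k => (b i k : P i)) :=
      (b i).linearIndependent.map' (Submodule.subtype _) (Submodule.ker_subtype _)
    rw [linearIndependent_iff'] at hbi
    let φ (k : Module.Free.ChooseBasisIndex R ((N i).map (f i))) :
        Σ i, Module.Free.ChooseBasisIndex R ((N i).map (f i)) := ⟨i, k⟩
    have hinj : Set.InjOn φ (φ ⁻¹' s) := fun _ _ _ _ h => eq_of_heq (Sigma.mk.inj h).2
    refine hgp (hbi (s.preimage φ hinj) (fun k => g (φ k)) ?_ k (Finset.mem_preimage.2 hps))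
    have h0 := congrArg (f i) hg
    rw [map_sum, map_zero] at h0
    rw [← h0, ← Finset.sum_preimage φ s hinj (fun p => f i (g p • w p))]
    · exact Finset.sum_congr rfl fun k _ => by simp [w, φ, hvf]
    · intro q hq hqi
      by_cases hgq : g q = 0
      · simp [hgq]
      · have hle : q.1 ≤ i :=
          hmax _ (Finset.mem_image_of_mem _ (Finset.mem_filter.2 ⟨hq, hgq⟩))
        have hlt' : q.1 < i := lt_of_le_of_ne hle fun h => hqi (by subst h; exact ⟨q.2, rfl⟩)
        have : f i (w q) = 0 := hlt i q.1 hlt' (hvN _ _)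
        simp [this]
  have hspan : ∀ i, N i ≤ Submodule.span R (Set.range w) := by
    intro i
    induction i using WellFoundedLT.induction with
    | ind i ih =>
    intro x hx
    have hmem : f i x ∈ (Submodule.span R (Set.range (v i))).map (f i) := by
      rw [Submodule.map_span, ← Set.range_comp]
      have hb := Submodule.mem_map_of_mem (f := ((N i).map (f i)).subtype)
        ((b i).mem_span ⟨f i x, Submodule.mem_map_of_mem hx⟩)
      rw [Submodule.map_span, ← Set.range_comp] at hb
      have hfun : f i ∘ v i = ((N i).map (f i)).subtype ∘ b i := funext fun k => hvf i k
      rw [hfun]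
      exact hb
    obtain ⟨y, hy, hyx⟩ := hmem
    have hyN : y ∈ N i :=
      Submodule.span_le.2 (Set.range_subset_iff.2 (hvN i)) hy
    have hyw : y ∈ Submodule.span R (Set.range w) := by
      refine Submodule.span_mono ?_ hy
      rintro _ ⟨k, rfl⟩
      exact ⟨⟨i, k⟩, rfl⟩
    have hsub : x - y ∈ Submodule.span R (Set.range w) :=
      iSup_le (fun j : Set.Iio i => ih j j.2)
        (hker i (x - y) (sub_mem hx hyN) (by rw [map_sub, hyx, sub_self]))
    simpa using add_mem hsub hyw
  have heq : (⨆ i, N i) = Submodule.span R (Set.range w) := by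
    refine le_antisymm (iSup_le hspan) (Submodule.span_le.2 ?_)
    rintro _ ⟨p, rfl⟩
    exact Submodule.mem_iSup_of_mem p.1 (hvN _ _)
  rw [heq]
  exact Module.Free.of_basis (Module.Basis.span hli)

/-- Every vector in the real span of a subgroup is approximated by fractions of elements of the
subgroup. -/
theorem exists_norm_sub_inv_natCast_smul_lt {X : Type*} [SeminormedAddCommGroup X]
    [NormedSpace ℝ X] (B : Submodule ℤ X) {v : X} (hv : v ∈ Submodule.span ℝ (B : Set X)) {ε : ℝ}
    (hε : 0 < ε) : ∃ b ∈ B, ∃ n : ℕ, 0 < n ∧ ‖v - (n : ℝ)⁻¹ • b‖ < ε := by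
  induction hv using Submodule.span_induction generalizing ε with
  | mem x hx => exact ⟨x, hx, 1, one_pos, by simpa⟩
  | zero => exact ⟨0, B.zero_mem, 1, one_pos, by simpa⟩
  | add x y _ _ hx hy =>
    obtain ⟨b, hb, n, hn, h⟩ := hx (half_pos hε)
    obtain ⟨c, hc, m, hm, h'⟩ := hy (half_pos hε)
    refine ⟨(m : ℤ) • b + (n : ℤ) • c, B.add_mem (B.smul_mem _ hb) (B.smul_mem _ hc), n * m,
      Nat.mul_pos hn hm, ?_⟩
    have hn' : (n : ℝ) ≠ 0 := by positivity
    have hm' : (m : ℝ) ≠ 0 := by positivity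
    have heq : x + y - ((n * m : ℕ) : ℝ)⁻¹ • ((m : ℤ) • b + (n : ℤ) • c) =
        (x - (n : ℝ)⁻¹ • b) + (y - (m : ℝ)⁻¹ • c) := by
      rw [← Int.cast_smul_eq_zsmul ℝ, ← Int.cast_smul_eq_zsmul ℝ]
      push_cast
      match_scalars <;> field_simp
    rw [heq]
    linarith [norm_add_le (x - (n : ℝ)⁻¹ • b) (y - (m : ℝ)⁻¹ • c)]
  | smul r x _ hx =>
    obtain ⟨b, hb, n, hn, h⟩ := hx (ε := ε / (2 * (|r| + 1))) (by positivity)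
    set u := (n : ℝ)⁻¹ • b with hu
    obtain ⟨q, hq⟩ := exists_rat_near r (ε := ε / (2 * (‖u‖ + 1))) (by positivity)
    refine ⟨q.num • b, B.smul_mem _ hb, q.den * n, Nat.mul_pos q.pos hn, ?_⟩
    have hscale : ((q.den * n : ℕ) : ℝ)⁻¹ • (q.num • b) = (q : ℝ) • u := by
      rw [← Int.cast_smul_eq_zsmul ℝ, hu, smul_smul, smul_smul, Rat.cast_def q]
      congr 1
      push_cast
      field_simp
    have heq : r • x - (q : ℝ) • u = r • (x - u) + (r - q) • u := by
      module
    rw [hscale, heq]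
    have h1 : |r| * ‖x - u‖ ≤ |r| * (ε / (2 * (|r| + 1))) := by gcongr
    have h2 : |r - q| * ‖u‖ ≤ ε / (2 * (‖u‖ + 1)) * ‖u‖ := by gcongr
    have h3 : |r| * (ε / (2 * (|r| + 1))) < ε / 2 := by
      rw [← mul_div_assoc, div_lt_div_iff₀ (by positivity) two_pos]
      nlinarith
    have h4 : ε / (2 * (‖u‖ + 1)) * ‖u‖ < ε / 2 := by
      rw [div_mul_eq_mul_div, div_lt_div_iff₀ (by positivity) two_pos]
      nlinarith
    have h5 := norm_add_le (r • (x - u)) ((r - q) • u)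
    rw [norm_smul, norm_smul, Real.norm_eq_abs, Real.norm_eq_abs] at h5
    linarith

/-- A subgroup `B` is saturated in `A` at scale `ε` if it contains every element of `A` within
distance `ε` of some fraction of an element of `B`. -/
def IsSaturated {X : Type*} [SeminormedAddCommGroup X] [NormedSpace ℝ X] (A : Submodule ℤ X)
    (ε : ℝ) (B : Submodule ℤ X) : Prop :=
  ∀ a ∈ A, ∀ b ∈ B, ∀ n : ℕ, ‖a - (n : ℝ)⁻¹ • b‖ < ε → a ∈ B

/-- The smallest saturated subgroup containing `T`. -/
def saturation {X : Type*} [SeminormedAddCommGroup X] [NormedSpace ℝ X] (A : Submodule ℤ X)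
    (ε : ℝ) (T : Set X) : Submodule ℤ X :=
  sInf {B | T ⊆ B ∧ IsSaturated A ε B}

section Saturation

variable {X : Type*} [SeminormedAddCommGroup X] [NormedSpace ℝ X] {A B : Submodule ℤ X} {ε : ℝ}

theorem isSaturated_saturation (A : Submodule ℤ X) (ε : ℝ) (T : Set X) :
    IsSaturated A ε (saturation A ε T) := by
  intro a ha b hb n h
  rw [saturation, Submodule.mem_sInf] at hb ⊢
  exact fun B hB => hB.2 a ha b (hb B hB) n h

theorem subset_saturation (A : Submodule ℤ X) (ε : ℝ) (T : Set X) : T ⊆ saturation A ε T := by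
  intro x hx
  rw [saturation, SetLike.mem_coe, Submodule.mem_sInf]
  exact fun B hB => hB.1 hx

theorem saturation_le {T : Set X} (hT : T ⊆ B) (hB : IsSaturated A ε B) : saturation A ε T ≤ B :=
  sInf_le ⟨hT, hB⟩

theorem saturation_mono {S T : Set X} (h : S ⊆ T) : saturation A ε S ≤ saturation A ε T :=
  saturation_le (h.trans (subset_saturation A ε T)) (isSaturated_saturation A ε T)

theorem isSaturated_self : IsSaturated A ε A :=
  fun _ ha _ _ _ _ => ha

theorem isSaturated_bot (hA : ∀ a ∈ A, ‖a‖ < ε → a = 0) : IsSaturated A ε ⊥ := by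
  intro a ha b hb n h
  rw [Submodule.mem_bot] at hb ⊢
  exact hA a ha (by simpa [hb] using h)

theorem isSaturated_iSup_of_directed {ι : Type*} [Nonempty ι] {N : ι → Submodule ℤ X}
    (hN : Directed (· ≤ ·) N) (h : ∀ i, IsSaturated A ε (N i)) : IsSaturated A ε (⨆ i, N i) := by
  intro a ha b hb n hab
  obtain ⟨i, hi⟩ := (Submodule.mem_iSup_of_directed N hN).1 hb
  exact Submodule.mem_iSup_of_mem i (h i a ha b hi n hab)

/-- An element of `A` close to the real span of a saturated subgroup lies in that subgroup. -/
theorem IsSaturated.mem_of_norm_mk_lt (hB : IsSaturated A ε B) {a : X} (ha : a ∈ A)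
    (h : ‖(Submodule.span ℝ (B : Set X)).topologicalClosure.mkQ a‖ < ε) : a ∈ B := by
  set V := (Submodule.span ℝ (B : Set X)).topologicalClosure
  obtain ⟨m, hm, hlt⟩ := Submodule.Quotient.norm_mk_lt (V.mkQ a) (sub_pos.2 h)
  rw [add_sub_cancel] at hlt
  have hmem : a - m ∈ V := by
    rw [← Submodule.Quotient.mk_eq_zero, Submodule.Quotient.mk_sub, hm]
    simp
  have hcl : a - m ∈ closure (Submodule.span ℝ (B : Set X) : Set X) := hmem
  obtain ⟨v, hv, hdist⟩ := Metric.mem_closure_iff.1 hcl ((ε - ‖m‖) / 2) (by linarith)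
  obtain ⟨b, hb, n, -, hbn⟩ :=
    exists_norm_sub_inv_natCast_smul_lt B hv (ε := (ε - ‖m‖) / 2) (by linarith)
  refine hB a ha b hb n ?_
  rw [dist_eq_norm] at hdist
  have heq : a - (n : ℝ)⁻¹ • b = m + (a - m - v) + (v - (n : ℝ)⁻¹ • b) := by abel
  rw [heq]
  have h1 := norm_add_le (m + (a - m - v)) (v - (n : ℝ)⁻¹ • b)
  have h2 := norm_add_le m (a - m - v)
  linarith

open Cardinal in
theorem cardinalMk_saturation_le_max (hA : ∀ a ∈ A, ‖a‖ < 2 * ε → a = 0) (T : Set X) :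
    #(saturation A ε T) ≤ max #T ℵ₀ := by
  classical
  let F : ℕ → X → X := fun n b =>
    if h : ∃ a ∈ A, ‖a - (n : ℝ)⁻¹ • b‖ < ε then h.choose else 0
  have hF {a b : X} {n : ℕ} (ha : a ∈ A) (h : ‖a - (n : ℝ)⁻¹ • b‖ < ε) : F n b = a := by
    have hex : ∃ a ∈ A, ‖a - (n : ℝ)⁻¹ • b‖ < ε := ⟨a, ha, h⟩
    have hFn : F n b = hex.choose := dif_pos hex
    rw [hFn, ← sub_eq_zero]
    refine hA _ (sub_mem hex.choose_spec.1 ha) ?_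
    have := norm_sub_le (hex.choose - (n : ℝ)⁻¹ • b) (a - (n : ℝ)⁻¹ • b)
    rw [sub_sub_sub_cancel_right] at this
    linarith [hex.choose_spec.2]
  obtain ⟨L, hL0, hLs⟩ : ∃ L : ℕ → Submodule ℤ X, L 0 = Submodule.span ℤ T ∧
      ∀ k, L (k + 1) = Submodule.span ℤ (L k ∪ ⋃ n, F n '' (L k : Set X)) :=
    ⟨fun k => Nat.rec (Submodule.span ℤ T) (fun _ B => Submodule.span ℤ (B ∪ ⋃ n, F n '' B)) k,
      rfl, fun _ => rfl⟩
  have hmono : Monotone L := monotone_nat_of_le_succ fun k x hx =>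
    (hLs k).symm ▸ Submodule.subset_span (Or.inl hx)
  have hcard (k) : #(L k) ≤ max #T ℵ₀ := by
    induction k with
    | zero => exact hL0 ▸ Submodule.cardinalMk_span_int_le_max T
    | succ k ih =>
      rw [hLs]
      refine (Submodule.cardinalMk_span_int_le_max _).trans (max_le ?_ (le_max_right _ _))
      refine (mk_union_le _ _).trans (add_le_of_le (le_max_right _ _) ih ?_)
      have hU := mk_iUnion_le_lift (fun n => F n '' (L k : Set X))
      simp only [lift_uzero, mk_nat, lift_aleph0] at hU
      refine hU.trans (mul_le_of_le (le_max_right _ _) (le_max_right _ _) ?_)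
      exact ciSup_le' fun n => mk_image_le.trans ih
  have hsat : IsSaturated A ε (⨆ k, L k) := by
    intro a ha b hb n h
    obtain ⟨k, hk⟩ := (Submodule.mem_iSup_of_directed L hmono.directed_le).1 hb
    refine Submodule.mem_iSup_of_mem (k + 1) ?_
    rw [hLs]
    exact Submodule.subset_span (Or.inr (Set.mem_iUnion.2 ⟨n, b, hk, hF ha h⟩))
  have hT : T ⊆ (⨆ k, L k : Submodule ℤ X) := fun x hx =>
    Submodule.mem_iSup_of_mem 0 (hL0 ▸ Submodule.subset_span hx)
  refine (mk_le_mk_of_subset (saturation_le hT hsat)).trans ?_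
  have hcoe : ((⨆ k, L k : Submodule ℤ X) : Set X) = ⋃ k, (L k : Set X) :=
    Submodule.coe_iSup_of_directed L hmono.directed_le
  rw [hcoe]
  have hU := mk_iUnion_le_lift (fun k => (L k : Set X))
  simp only [lift_uzero, mk_nat, lift_aleph0] at hU
  exact hU.trans (mul_le_of_le (le_max_right _ _) (le_max_right _ _) (ciSup_le' hcard))

end Saturation

theorem discreteTopology_of_norm_lt_imp_eq_zero {X : Type*} [NormedAddCommGroup X]
    {A : Submodule ℤ X} {δ : ℝ} (hδ : 0 < δ)
    (hA : ∀ a ∈ A, ‖a‖ < δ → a = 0) : DiscreteTopology A := by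
  refine DiscreteTopology.of_forall_le_dist hδ fun x y hxy => ?_
  by_contra! h
  rw [Subtype.dist_eq, dist_eq_norm] at h
  exact hxy (Subtype.ext (sub_eq_zero.1 (hA _ (sub_mem x.2 y.2) h)))

section Discrete

variable {X : Type*} [NormedAddCommGroup X] [NormedSpace ℝ X]

theorem finite_inf_span_of_norm_lt_imp_eq_zero {A : Submodule ℤ X} {δ : ℝ} (hδ : 0 < δ)
    (hA : ∀ a ∈ A, ‖a‖ < δ → a = 0) {s : Set X} (hs : s.Finite) :
    Module.Finite ℤ (A ⊓ (Submodule.span ℝ s).restrictScalars ℤ : Submodule ℤ X) := by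
  set V := Submodule.span ℝ s
  have : FiniteDimensional ℝ V := FiniteDimensional.span_of_finite ℝ hs
  let g : V →ₗ[ℤ] X := V.subtype.restrictScalars ℤ
  have : DiscreteTopology (A.comap g) :=
    discreteTopology_of_norm_lt_imp_eq_zero hδ fun a ha hlt => Subtype.ext (hA _ ha hlt)
  have heq : (A.comap g).map g = A ⊓ V.restrictScalars ℤ := by
    rw [Submodule.map_comap_eq, inf_comm]
    congr 1
    ext x
    simp [g]
  rw [← heq]
  infer_instance

theorem free_of_countable_of_norm_lt_imp_eq_zero {A : Submodule ℤ X} [Countable A] {δ : ℝ}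
    (hδ : 0 < δ) (hA : ∀ a ∈ A, ‖a‖ < δ → a = 0) : Module.Free ℤ A := by
  obtain ⟨e, he⟩ := exists_surjective_nat A
  let V : ℕ → Submodule ℝ X := fun n => Submodule.span ℝ ((fun k => (e k : X)) '' Set.Iio n)
  have hVmono : Monotone V := fun m n h =>
    Submodule.span_mono (Set.image_mono (Set.Iio_subset_Iio h))
  let N : ℕ → Submodule ℤ X := fun n => A ⊓ (V (n + 1)).restrictScalars ℤ
  have hsup : (⨆ n, N n) = A := by
    refine le_antisymm (iSup_le fun n => inf_le_left) fun x hx => ?_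
    obtain ⟨n, hn⟩ := he ⟨x, hx⟩
    refine Submodule.mem_iSup_of_mem n ⟨hx, Submodule.subset_span ⟨n, Nat.lt_succ_self n, ?_⟩⟩
    simp [hn]
  rw [← hsup]
  refine Module.Free.iSup_of_wellOrdered_filtration N
    (fun n => (V n).mkQ.restrictScalars ℤ) ?_ ?_ ?_
  · intro n x hx h0
    have hxV : x ∈ V n := by simpa using h0
    cases n with
    | zero =>
      have : x = 0 := by simpa [V] using hxV
      rw [this]
      exact zero_mem _
    | succ n =>
      exact Submodule.mem_iSup_of_mem (⟨n, Nat.lt_succ_self n⟩ : Set.Iio (n + 1)) ⟨hx.1, hxV⟩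
  · intro i j hji x hx
    have hxV : x ∈ V i := hVmono hji hx.2
    simpa using hxV
  · intro n
    have : Module.Finite ℤ (N n) :=
      finite_inf_span_of_norm_lt_imp_eq_zero hδ hA ((Set.finite_Iio _).image _)
    have : Module ℚ (X ⧸ V n) := Module.compHom _ (algebraMap ℚ ℝ)
    have : IsAddTorsionFree (X ⧸ V n) := .of_module_rat _
    infer_instance

end Discrete

open Cardinal in
theorem free_of_norm_lt_imp_eq_zero {X : Type*} [NormedAddCommGroup X] [NormedSpace ℝ X]
    (A : Submodule ℤ X) {δ : ℝ} (hδ : 0 < δ) (hA : ∀ a ∈ A, ‖a‖ < δ → a = 0) :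
    Module.Free ℤ A := by
  induction hκ : #A using WellFoundedLT.induction generalizing X δ with
  | ind κ ih =>
  subst hκ
  by_cases hcount : #A ≤ ℵ₀
  · have : Countable A := mk_le_aleph0_iff.1 hcount
    exact free_of_countable_of_norm_lt_imp_eq_zero hδ hA
  rw [not_le] at hcount
  obtain ⟨_, _, hord⟩ := exists_ord_eq_type_lt A
  set ε := δ / 2 with hε
  have hε0 : 0 < ε := half_pos hδ
  have hA2 : ∀ a ∈ A, ‖a‖ < 2 * ε → a = 0 := fun a ha h => hA a ha (by linarith)
  let N : A → Submodule ℤ X := fun i => saturation A ε (Subtype.val '' Set.Iic i)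
  have hNmono : Monotone N := fun i j h =>
    saturation_mono (Set.image_mono (Set.Iic_subset_Iic.2 h))
  have hNA (i) : N i ≤ A :=
    saturation_le (Set.image_subset_iff.2 fun x _ => x.2) isSaturated_self
  have hsup : (⨆ i, N i) = A :=
    le_antisymm (iSup_le hNA) fun x hx => Submodule.mem_iSup_of_mem ⟨x, hx⟩
      (subset_saturation A ε _ ⟨⟨x, hx⟩, Set.mem_Iic.2 le_rfl, rfl⟩)
  let U : A → Submodule ℤ X := fun i => ⨆ j : Set.Iio i, N j
  have hU (i) : IsSaturated A ε (U i) := by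
    rcases isEmpty_or_nonempty (Set.Iio i) with h | h
    · simp only [U, iSup_of_empty]
      exact isSaturated_bot fun a ha h => hA a ha (by linarith)
    · exact isSaturated_iSup_of_directed
        (hNmono.comp (Subtype.mono_coe _)).directed_le fun j => isSaturated_saturation A ε _
  let V : A → Submodule ℝ X := fun i => (Submodule.span ℝ (U i : Set X)).topologicalClosure
  have hUV (i) {x : X} (hx : x ∈ U i) : (V i).mkQ x = 0 := by
    simpa using Submodule.le_topologicalClosure _ (Submodule.subset_span hx)
  have hfree : Module.Free ℤ (⨆ i, N i : Submodule ℤ X) := by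
    refine Module.Free.iSup_of_wellOrdered_filtration N
      (fun i => (V i).mkQ.restrictScalars ℤ) ?_ ?_ ?_
    · intro i x hx h0
      have h0' : (V i).mkQ x = 0 := h0
      exact (hU i).mem_of_norm_mk_lt (hNA i hx) (by rw [h0', norm_zero]; exact hε0)
    · intro i j hji x hx
      exact hUV i (Submodule.mem_iSup_of_mem (⟨j, hji⟩ : Set.Iio i) hx)
    · intro i
      have : IsClosed (V i : Set X) := Submodule.isClosed_topologicalClosure _
      refine ih _ ?_ _ hε0 ?_ rfl
      · refine lt_of_le_of_lt (mk_image_le (s := (N i : Set X))) ?_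
        refine (cardinalMk_saturation_le_max hA2 _).trans_lt (max_lt ?_ hcount)
        exact mk_image_le.trans_lt (mk_Iic_lt i hord hcount.le)
      · rintro _ ⟨x, hx, rfl⟩ hlt
        exact hUV i ((hU i).mem_of_norm_mk_lt (hNA i hx) hlt)
  rwa [hsup] at hfree

/-- Every discrete subgroup of the additive group of a real normed space is a
free Abelian group (free `ℤ`-module). -/
theorem discrete_subgroup_of_normed_space_free
    (X : Type*) [NormedAddCommGroup X] [NormedSpace ℝ X]
    (A : AddSubgroup X) [DiscreteTopology A] :
    Module.Free ℤ A := by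
  obtain ⟨δ, hδ, h⟩ := Metric.exists_ball_inter_eq_singleton_of_mem_discrete
    (s := (A : Set X)) DiscreteTopology.isDiscrete A.zero_mem
  refine free_of_norm_lt_imp_eq_zero A.toIntSubmodule hδ fun a ha hlt => ?_
  have hmem : a ∈ Metric.ball (0 : X) δ ∩ A := ⟨by simpa using hlt, ha⟩
  rw [h] at hmem
  exact hmem
end

section
/- (Shelah's Singular Compactness Theorem, special case.) Let κ be a singular cardinal (an infinite cardinal that is not equal to its own cofinality). If A is an Abelian group of cardinality κ such that every subgroup of A of cardinality smaller than κ is a free ℤ-module, then A is a free ℤ-module. -/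
open Cardinal Submodule Set

universe u v

section Summands

variable {R : Type v} {M : Type u} [Ring R] [AddCommGroup M] [Module R M]

/-- `B` has an internal direct complement in the submodule `C`. -/
def IsSummandOf (B C : Submodule R M) : Prop :=
  ∃ D : Submodule R M, Disjoint B D ∧ B ⊔ D = C

/-- `B` is a direct summand of every submodule of cardinality at most `μ` containing it. -/
def SplitsUpTo (μ : Cardinal.{u}) (B : Submodule R M) : Prop :=
  ∀ C : Submodule R M, B ≤ C → #C ≤ μ → IsSummandOf B C

theorem IsSummandOf.of_le {B C U : Submodule R M} (h : IsSummandOf B U) (hBC : B ≤ C)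
    (hCU : C ≤ U) : IsSummandOf B C := by
  obtain ⟨D, hD, rfl⟩ := h
  refine ⟨D ⊓ C, hD.mono_right inf_le_left, ?_⟩
  rw [← sup_inf_assoc_of_le D hBC, inf_eq_right.2 hCU]

theorem LinearIndepOn.disjoint_span {X s t : Set M} (hX : LinearIndepOn R id X) (hs : s ⊆ X)
    (ht : t ⊆ X) (hst : Disjoint s t) : Disjoint (span R s) (span R t) := by
  have := LinearIndependent.disjoint_span_image hX (s := Subtype.val ⁻¹' s)
    (t := Subtype.val ⁻¹' t) (hst.preimage _)
  have him (w : Set M) (hw : w ⊆ X) :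
      (fun x : X => id (x : M)) '' (Subtype.val ⁻¹' w) = w := by
    simpa using hw
  rwa [him s hs, him t ht] at this

theorem disjoint_span_diff {X : Set M} (hX : LinearIndepOn R id X) {B : Submodule R M}
    (hB : B ≤ span R (X ∩ B)) : Disjoint B (span R (X \ B)) :=
  (hX.disjoint_span inter_subset_left sdiff_subset disjoint_sdiff_inter.symm).mono_left hB

theorem sup_span_diff {X : Set M} {B : Submodule R M} (hB : B ≤ span R (X ∩ B)) :
    B ⊔ span R (X \ B) = span R X := by
  have : B = span R (X ∩ B) := hB.antisymm (span_le.2 inter_subset_right)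
  nth_rw 1 [this]
  rw [← span_union, inter_union_sdiff]

theorem isSummandOf_span {X : Set M} (hX : LinearIndepOn R id X) {B : Submodule R M}
    (hB : B ≤ span R (X ∩ B)) : IsSummandOf B (span R X) :=
  ⟨_, disjoint_span_diff hX hB, sup_span_diff hB⟩

theorem Submodule.exists_linearIndepOn_span_eq (U : Submodule R M) [Module.Free R U] :
    ∃ X : Set M, LinearIndepOn R id X ∧ span R X = U := by
  let b := Module.Free.chooseBasis R U
  refine ⟨range (U.subtype ∘ b), ?_, ?_⟩
  · exact (b.linearIndependent.map' U.subtype U.ker_subtype).linearIndepOn_id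
  · rw [range_comp, span_image, b.span_eq, map_subtype_top]

theorem Module.Free.of_linearIndepOn {W : Set M} (hW : LinearIndepOn R id W)
    (hspan : span R W = ⊤) : Module.Free R M :=
  .of_basis (Module.Basis.mk (v := fun x : W => (x : M)) hW (by simp [hspan]))

theorem LinearIndepOn.exists_extension {X : Set M} {C : Submodule R M}
    (hX : LinearIndepOn R id X) (h : IsSummandOf (span R X) C)
    (hfree : ∀ D : Submodule R M, D ≤ C → Module.Free R D) :
    ∃ X', X ⊆ X' ∧ LinearIndepOn R id X' ∧ span R X' = C := by
  obtain ⟨D, hD, rfl⟩ := h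
  have := hfree D le_sup_right
  obtain ⟨Y, hY, rfl⟩ := D.exists_linearIndepOn_span_eq
  exact ⟨X ∪ Y, subset_union_left, hX.id_union hY hD, span_union X Y⟩

end Summands

section Cardinality

variable {R : Type v} {M : Type u} [Ring R] [AddCommGroup M] [Module R M]

theorem Cardinal.mk_iUnion_le_of_le {ι α : Type u} {μ : Cardinal.{u}} (hμ : ℵ₀ ≤ μ)
    (f : ι → Set α) (hι : #ι ≤ μ) (hf : ∀ i, #(f i) ≤ μ) : #(⋃ i, f i) ≤ μ :=
  (mk_iUnion_le f).trans ((mul_le_mul' hι (ciSup_le' hf)).trans_eq (mul_eq_self hμ))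

theorem Cardinal.mk_union_le_of_le {α : Type u} {μ : Cardinal.{u}} (hμ : ℵ₀ ≤ μ) {s t : Set α}
    (hs : #s ≤ μ) (ht : #t ≤ μ) : #(s ∪ t : Set α) ≤ μ :=
  (mk_union_le s t).trans (add_le_of_le hμ hs ht)

theorem Cardinal.mk_span_le_of_le [Countable R] {μ : Cardinal.{u}} (hμ : ℵ₀ ≤ μ) {S : Set M}
    (hS : #S ≤ μ) : #(span R S) ≤ μ := by
  have hsurj : Function.Surjective
      (fun l : S →₀ R => (⟨Finsupp.linearCombination R (fun x : S => (x : M)) l, by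
        rw [Finsupp.mem_span_iff_linearCombination]; exact ⟨l, rfl⟩⟩ : span R S)) := by
    rintro ⟨x, hx⟩
    obtain ⟨l, rfl⟩ := (Finsupp.mem_span_iff_linearCombination R S x).1 hx
    exact ⟨l, rfl⟩
  have hle := mk_le_of_surjective (Equiv.ulift.{v}.symm.surjective.comp
    (hsurj.comp Equiv.ulift.{u}.surjective))
  rw [mk_uLift, mk_uLift] at hle
  have hfinsupp : lift.{u} #(S →₀ R) ≤ lift.{v} μ := by
    have hμ' : ℵ₀ ≤ lift.{v} μ := by simpa
    cases finite_or_infinite S with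
    | inl _ => exact (lift_le_aleph0.2 (mk_le_aleph0 (α := S →₀ R))).trans hμ'
    | inr _ =>
      cases subsingleton_or_nontrivial R with
      | inl _ => exact (lift_le_aleph0.2 (mk_le_aleph0 (α := S →₀ R))).trans hμ'
      | inr _ =>
        rw [mk_finsupp_lift_of_infinite, lift_max, lift_lift, lift_lift]
        refine max_le ?_ ((lift_le_aleph0.2 (mk_le_aleph0 (α := R))).trans hμ')
        rw [lift_umax.{u, v}]
        exact lift_le.2 hS
  exact lift_le.1 (hle.trans hfinsupp)

theorem Submodule.exists_support_cover {X B : Set M} {μ : Cardinal.{u}} (hμ : ℵ₀ ≤ μ)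
    (hBX : B ⊆ span R X) (hB : #B ≤ μ) :
    ∃ T ⊆ X, #T ≤ μ ∧ B ⊆ span R T := by
  choose t htX ht using fun x : B => mem_span_finite_of_mem_span (hBX x.2)
  refine ⟨⋃ x, t x, iUnion_subset htX, ?_, fun x hx => ?_⟩
  · exact mk_iUnion_le_of_le hμ _ hB fun x => (finset_card_lt_aleph0 _).le.trans hμ
  · exact span_mono (subset_iUnion (fun x => (t x : Set M)) ⟨x, hx⟩) (ht ⟨x, hx⟩)

theorem exists_gt_of_mk_le {μ : Cardinal.{u}} (hμ : ℵ₀ ≤ μ) (s : Set (Order.succ μ).ord.ToType)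
    (hs : #s ≤ μ) : ∃ i, ∀ j ∈ s, j < i := by
  by_contra! h
  have hcover : (⋃ j : s, Iic (j : (Order.succ μ).ord.ToType)) = Set.univ := by
    refine eq_univ_of_forall fun i => ?_
    obtain ⟨j, hj, hij⟩ := h i
    exact mem_iUnion.2 ⟨⟨j, hj⟩, hij⟩
  have hIic (j : (Order.succ μ).ord.ToType) : #(Iic j) ≤ μ := by
    rw [← Iio_union_right]
    refine mk_union_le_of_le hμ (Order.lt_succ_iff.1 ?_) (by simpa using one_le_aleph0.trans hμ)
    simpa using mk_Iio_lt j
  have := mk_iUnion_le_of_le hμ _ hs fun j => hIic j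
  rw [hcover, mk_univ, mk_toType, card_ord] at this
  exact this.not_gt (Order.lt_succ μ)

end Cardinality

section Splitting

variable {R : Type v} {M : Type u} [Ring R] [Countable R] [AddCommGroup M] [Module R M]

/-- If all submodules of cardinality at most `μ⁺` are free, then every set of cardinality at most
`μ` lies in a submodule of cardinality at most `μ` that splits off all its extensions of
cardinality at most `μ`. -/
theorem exists_splitsUpTo {μ : Cardinal.{u}} (hμ : ℵ₀ ≤ μ)
    (hfree : ∀ U : Submodule R M, #U ≤ Order.succ μ → Module.Free R U)
    (S : Set M) (hS : #S ≤ μ) :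
    ∃ B : Submodule R M, S ⊆ B ∧ #B ≤ μ ∧ SplitsUpTo μ B := by
  by_contra! hcon
  have hext (B : Submodule R M) : ∃ C : Submodule R M, S ⊆ B → #B ≤ μ →
      B ≤ C ∧ #C ≤ μ ∧ ¬ IsSummandOf B C := by
    by_cases hB : S ⊆ B ∧ #B ≤ μ
    · have := hcon B hB.1 hB.2
      simp only [SplitsUpTo, not_forall] at this
      obtain ⟨C, hBC, hC, h⟩ := this
      exact ⟨C, fun _ _ => ⟨hBC, hC, h⟩⟩
    · exact ⟨B, fun h₁ h₂ => (hB ⟨h₁, h₂⟩).elim⟩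
  choose F hF using hext
  let I := (Order.succ μ).ord.ToType
  have hI : #I = Order.succ μ := by simp [I]
  obtain ⟨B, hB⟩ : ∃ B : I → Submodule R M, ∀ i, B i = span R S ⊔ ⨆ j : Iio i, F (B j) :=
    ⟨WellFoundedLT.fix fun i ih => span R S ⊔ ⨆ j : Iio i, F (ih j j.2),
      fun i => WellFoundedLT.fix_eq _ i⟩
  have hSB (i) : S ⊆ B i := by
    rw [hB i]
    exact subset_span.trans (SetLike.coe_subset_coe.2 le_sup_left)
  have hFB {j i} (hji : j < i) : F (B j) ≤ B i := by
    rw [hB i]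
    exact le_sup_of_le_right (le_iSup (fun j : Iio i => F (B j)) ⟨j, hji⟩)
  have hBcard (i) : #(B i) ≤ μ := by
    induction i using WellFoundedLT.induction with
    | ind i ih =>
      have : B i = span R (S ∪ ⋃ j : Iio i, (F (B j) : Set M)) := by
        rw [hB i, span_union, span_iUnion]
        simp
      rw [this]
      refine mk_span_le_of_le hμ (mk_union_le_of_le hμ hS (mk_iUnion_le_of_le hμ _ ?_ ?_))
      · exact Order.lt_succ_iff.1 (by simpa [I] using mk_Iio_lt i)
      · exact fun j => (hF (B j) (hSB j) (ih j j.2)).2.1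
  have hBF (i) : B i ≤ F (B i) := (hF (B i) (hSB i) (hBcard i)).1
  have hmono : Monotone B := fun i j hij => by
    rcases hij.eq_or_lt with rfl | h
    exacts [le_rfl, (hBF i).trans (hFB h)]
  have hne : Nonempty I := mk_ne_zero_iff.1 (by rw [hI]; exact (Order.bot_lt_succ μ).ne')
  have hdir : Directed (· ≤ ·) B := hmono.directed_le
  have hU : #(⨆ i, B i : Submodule R M) ≤ Order.succ μ := by
    have := mk_iUnion_le_of_le (hμ.trans (Order.le_succ μ)) (fun i => (B i : Set M)) hI.le
      fun i => (hBcard i).trans (Order.le_succ μ)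
    rwa [← coe_iSup_of_directed B hdir] at this
  have := hfree _ hU
  obtain ⟨X, hX, hXspan⟩ := (⨆ i, B i).exists_linearIndepOn_span_eq
  have hsupp (i : I) : ∃ j > i, B i ≤ span R (X ∩ B j) := by
    have hBX : (B i : Set M) ⊆ span R X := by
      rw [hXspan]
      exact le_iSup B i
    obtain ⟨T, hTX, hT, hBT⟩ := exists_support_cover hμ hBX (hBcard i)
    have hidx (y : T) : ∃ k, (y : M) ∈ B k := by
      rw [← mem_iSup_of_directed B hdir, ← hXspan]
      exact subset_span (hTX y.2)
    choose k hk using hidx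
    obtain ⟨j, hj⟩ := exists_gt_of_mk_le hμ (range k ∪ {i})
      (mk_union_le_of_le hμ (mk_range_le.trans hT) (by simpa using one_le_aleph0.trans hμ))
    have hTj : T ⊆ X ∩ B j := fun y hy =>
      ⟨hTX hy, hmono (hj _ (Or.inl (mem_range_self ⟨y, hy⟩))).le (hk ⟨y, hy⟩)⟩
    exact ⟨j, hj i (by simp), fun x hx => span_mono hTj (hBT hx)⟩
  choose g hg hgB using hsupp
  obtain ⟨i₀⟩ := hne
  let γ : ℕ → I := fun n => g^[n] i₀
  have hγ (n) : γ (n + 1) = g (γ n) := Function.iterate_succ_apply' g n i₀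
  obtain ⟨b, hb⟩ := exists_gt_of_mk_le hμ (range γ) ((countable_range γ).le_aleph0.trans hμ)
  obtain ⟨α, hα, hmin⟩ := WellFounded.has_min (wellFounded_lt (α := I)) {b | ∀ n, γ n < b}
    ⟨b, fun n => hb _ ⟨n, rfl⟩⟩
  have hstep (n) : B (γ n) ≤ span R (X ∩ B α) :=
    (hgB (γ n)).trans (span_mono (inter_subset_inter_right _ (hmono (hγ n ▸ (hα (n + 1)).le))))
  have hclosed : B α ≤ span R (X ∩ B α) := by
    conv_lhs => rw [hB α]
    refine sup_le ((span_le.2 (hSB (γ 0))).trans (hstep 0)) (iSup_le ?_)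
    rintro ⟨j, hj⟩
    have : ∃ n, j ≤ γ n := by
      by_contra! h
      exact hmin j h hj
    obtain ⟨n, hn⟩ := this
    exact (hFB (hn.trans_lt (hγ n ▸ hg (γ n)))).trans (hstep (n + 1))
  have hsum := isSummandOf_span hX hclosed
  rw [hXspan] at hsum
  exact (hF (B α) (hSB α) (hBcard α)).2.2
    (hsum.of_le (hBF α) ((hFB (hg α)).trans (le_iSup B _)))

end Splitting

section Chains

variable {R : Type v} {M : Type u} [Ring R] [AddCommGroup M] [Module R M]

/-- A module is free if it is the union of a well-ordered chain of submodules, each with a basis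
that contains a basis of every earlier one. The chain need not be continuous. -/
theorem Module.Free.of_compatible_chain {I : Type*} [LinearOrder I] [WellFoundedLT I]
    (X : I → Set M) (hX : ∀ i, LinearIndepOn R id (X i))
    (hcompat : ∀ i k, i < k → span R (X i) ≤ span R (X k ∩ span R (X i)))
    (htop : ⨆ i, span R (X i) = ⊤) : Module.Free R M := by
  let L (k : I) : Submodule R M := ⨆ i : Iio k, span R (X i)
  have hL (k) : L k ≤ span R (X k ∩ L k) :=
    iSup_le fun i => (hcompat i k i.2).trans
      (span_mono (inter_subset_inter_right _ (le_iSup (fun i : Iio k => span R (X i)) i)))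
  let V (k : I) : Set M := ⋃ j : Iic k, X j \ L j
  have hVmono : Monotone V := fun i k hik =>
    iUnion_subset fun j => subset_iUnion (fun j : Iic k => X j \ L j) ⟨j, j.2.trans hik⟩
  have hVk (k) : V k = (⋃ i : Iio k, V i) ∪ X k \ L k := by
    refine subset_antisymm (iUnion_subset ?_) (union_subset (iUnion_subset ?_) ?_)
    · rintro ⟨j, hj⟩
      rcases (mem_Iic.1 hj).eq_or_lt with rfl | hjk
      · exact subset_union_right
      · refine subset_union_of_subset_left ?_ _
        exact (subset_iUnion (fun l : Iic j => X l \ L l) ⟨j, le_rfl⟩).trans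
          (subset_iUnion (fun i : Iio k => V i) ⟨j, hjk⟩)
    · exact fun i => hVmono (le_of_lt i.2)
    · exact subset_iUnion (fun j : Iic k => X j \ L j) ⟨k, le_rfl⟩
  have hV (k) : LinearIndepOn R id (V k) ∧ span R (V k) = span R (X k) := by
    induction k using WellFoundedLT.induction with
    | ind k ih =>
      have hli : LinearIndepOn R id (⋃ i : Iio k, V i) :=
        linearIndepOn_iUnion_of_directed
          (Monotone.directed_le fun i j hij => hVmono hij) fun i => (ih i i.2).1
      have hspan : span R (⋃ i : Iio k, V i) = L k := by
        rw [span_iUnion]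
        exact iSup_congr fun i => (ih i i.2).2
      rw [hVk]
      refine ⟨hli.id_union ((hX k).mono sdiff_subset) ?_, ?_⟩
      · rw [hspan]
        exact disjoint_span_diff (hX k) (hL k)
      · rw [span_union, hspan, sup_span_diff (hL k)]
  refine .of_linearIndepOn (linearIndepOn_iUnion_of_directed hVmono.directed_le
    fun i => (hV i).1) ?_
  rw [span_iUnion, ← htop]
  exact iSup_congr fun i => (hV i).2

end Chains

section SingularCompactness

variable {R : Type v} {M : Type u} [Ring R] [Countable R] [AddCommGroup M] [Module R M]

/-- One round of the simultaneous construction of the bases `X i`, which enlarges every `X i` to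
absorb the earlier spans and the supports of its elements with respect to all the `X k`. -/
theorem exists_next_bases {I : Type u} [LinearOrder I] {κ : Cardinal.{u}} {c : I → Cardinal.{u}}
    (hc : Monotone c) (hc₀ : ∀ i, ℵ₀ ≤ c i) (hcI : ∀ i, #I ≤ c i)
    (hcκ : ∀ i, Order.succ (c i) < κ)
    (hfree : ∀ U : Submodule R M, #U < κ → Module.Free R U)
    (X : I → Set M) (hX : ∀ i, LinearIndepOn R id (X i))
    (hcard : ∀ i, #(span R (X i)) ≤ c i) (hsplit : ∀ i, SplitsUpTo (c i) (span R (X i))) :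
    ∃ X' : I → Set M, (∀ i, LinearIndepOn R id (X' i) ∧ #(span R (X' i)) ≤ c i ∧
        SplitsUpTo (c i) (span R (X' i))) ∧
      (∀ i, X i ⊆ X' i) ∧ (∀ i k, i ≤ k → span R (X i) ≤ span R (X' k)) ∧
      ∀ i k, span R (X i) ⊓ span R (X k) ≤ span R (X k ∩ span R (X' i)) := by
  have hT (i k : I) := exists_support_cover (R := R) (hc₀ i)
    (B := (span R (X i) ⊓ span R (X k) : Submodule R M)) (X := X k)
    (SetLike.coe_subset_coe.2 inf_le_right)
    ((mk_le_mk_of_subset (SetLike.coe_subset_coe.2 inf_le_left)).trans (hcard i))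
  choose T hTX hTc hT using hT
  have hB (i : I) := exists_splitsUpTo (R := R) (hc₀ i)
    (fun U hU => hfree U (hU.trans_lt (hcκ i)))
    ((⋃ j : Iic i, (span R (X j) : Set M)) ∪ ⋃ k, T i k)
    (mk_union_le_of_le (hc₀ i)
      (mk_iUnion_le_of_le (hc₀ i) _ ((mk_set_le _).trans (hcI i))
        fun j => (hcard j).trans (hc j.2))
      (mk_iUnion_le_of_le (hc₀ i) _ (hcI i) fun k => hTc i k))
  choose B hSB hBc hBs using hB
  have hle {i k : I} (hik : i ≤ k) : span R (X i) ≤ B k :=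
    (subset_iUnion (fun j : Iic k => (span R (X j) : Set M)) ⟨i, hik⟩).trans
      (subset_union_left.trans (hSB k))
  have hX' (i : I) := (hX i).exists_extension (hsplit i (B i) (hle le_rfl) (hBc i))
    fun D hD => hfree D ((mk_le_mk_of_subset hD).trans_lt
      ((hBc i).trans_lt ((Order.lt_succ _).trans (hcκ i))))
  choose X' hXX' hX'li hX'span using hX'
  refine ⟨X', fun i => ⟨hX'li i, ?_, ?_⟩, hXX', fun i k hik => ?_, fun i k => ?_⟩
  · rw [hX'span]
    exact hBc i
  · rw [hX'span]
    exact hBs i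
  · rw [hX'span]
    exact hle hik
  · rw [hX'span]
    refine fun x hx => span_mono (subset_inter (hTX i k) ?_) (hT i k hx)
    exact (subset_iUnion (T i) k).trans (subset_union_right.trans (hSB i))

/-- Singular compactness, with the singular cardinal presented as the limit of few smaller
cardinals `c i`. -/
theorem Module.Free.of_filtration {I : Type u} [LinearOrder I] [WellFoundedLT I]
    {κ : Cardinal.{u}} {c : I → Cardinal.{u}}
    (hc : Monotone c) (hc₀ : ∀ i, ℵ₀ ≤ c i) (hcI : ∀ i, #I ≤ c i)
    (hcκ : ∀ i, Order.succ (c i) < κ)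
    (hfree : ∀ U : Submodule R M, #U < κ → Module.Free R U)
    (T : I → Set M) (hT : ∀ i, #(T i) ≤ c i) (hTtop : ⋃ i, T i = Set.univ) :
    Module.Free R M := by
  let State := {X : I → Set M // ∀ i, LinearIndepOn R id (X i) ∧ #(span R (X i)) ≤ c i ∧
    SplitsUpTo (c i) (span R (X i))}
  have hnext (X : State) : ∃ X' : State, (∀ i, X.1 i ⊆ X'.1 i) ∧
      (∀ i k, i ≤ k → span R (X.1 i) ≤ span R (X'.1 k)) ∧
      ∀ i k, span R (X.1 i) ⊓ span R (X.1 k) ≤ span R (X.1 k ∩ span R (X'.1 i)) := by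
    obtain ⟨X', hX', h⟩ := exists_next_bases hc hc₀ hcI hcκ hfree X.1 (fun i => (X.2 i).1)
      (fun i => (X.2 i).2.1) (fun i => (X.2 i).2.2)
    exact ⟨⟨X', hX'⟩, h⟩
  have hinit : ∃ X : State, ∀ i, T i ⊆ span R (X.1 i) := by
    have hB (i : I) := exists_splitsUpTo (R := R) (hc₀ i)
      (fun U hU => hfree U (hU.trans_lt (hcκ i))) (T i) (hT i)
    choose B hTB hBc hBs using hB
    have hX (i : I) : ∃ X : Set M, LinearIndepOn R id X ∧ span R X = B i := by
      have := hfree (B i) ((hBc i).trans_lt ((Order.lt_succ _).trans (hcκ i)))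
      exact (B i).exists_linearIndepOn_span_eq
    choose X hX hspan using hX
    exact ⟨⟨X, fun i => by rw [hspan]; exact ⟨hX i, hBc i, hBs i⟩⟩,
      fun i => by rw [hspan]; exact hTB i⟩
  choose next hsub hle hsupp using hnext
  obtain ⟨X₀, hX₀⟩ := hinit
  let Y (n : ℕ) : State := next^[n] X₀
  have hY (n) : Y (n + 1) = next (Y n) := Function.iterate_succ_apply' next n X₀
  have hYmono (i : I) : Monotone fun n => (Y n).1 i :=
    monotone_nat_of_le_succ fun n => by
      rw [hY]
      exact hsub (Y n) i
  have hspan (i : I) : span R (⋃ n, (Y n).1 i) = ⨆ n, span R ((Y n).1 i) := span_iUnion _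
  have hspanmono (i : I) : Monotone fun n => span R ((Y n).1 i) :=
    fun _ _ h => span_mono (hYmono i h)
  have hmono : Monotone fun i => span R (⋃ n, (Y n).1 i) := fun i k hik => by
    simp only [hspan]
    refine iSup_le fun n => le_iSup_of_le (n + 1) ?_
    rw [hY]
    exact hle (Y n) i k hik
  refine .of_compatible_chain (fun i => ⋃ n, (Y n).1 i)
    (fun i => linearIndepOn_iUnion_of_directed (hYmono i).directed_le fun n => ((Y n).2 i).1)
    (fun i k hik x hx => ?_) ?_
  · have hxk := hmono hik.le hx
    simp only [hspan] at hx hxk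
    rw [mem_iSup_of_directed _ (hspanmono _).directed_le] at hx hxk
    obtain ⟨m, hm⟩ := hx
    obtain ⟨n, hn⟩ := hxk
    have := hsupp (Y (max m n)) i k
      ⟨hspanmono i (le_max_left m n) hm, hspanmono k (le_max_right m n) hn⟩
    rw [← hY] at this
    exact span_mono (inter_subset_inter (subset_iUnion (fun n => (Y n).1 k) _)
      (span_mono (subset_iUnion (fun n => (Y n).1 i) _))) this
  · refine eq_top_iff.2 fun x _ => ?_
    obtain ⟨i, hi⟩ := mem_iUnion.1 (hTtop ▸ mem_univ x)
    exact mem_iSup_of_mem i (span_mono (subset_iUnion (fun n => (Y n).1 i) 0) (hX₀ i hi))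

/-- Singular compactness for modules over a countable ring: if `κ` is singular, a module of
cardinality `κ` whose submodules of cardinality smaller than `κ` are all free is itself free. -/
theorem Module.Free.of_singular {κ : Cardinal.{u}} (hκ : κ.IsSingular)
    (hcard : #M = κ) (hfree : ∀ U : Submodule R M, #U < κ → Module.Free R U) :
    Module.Free R M := by
  obtain ⟨s, hs, hscard⟩ := Order.exists_cof_eq κ.ord.ToType
  rw [Ordinal.cof_toType] at hscard
  have : NoMaxOrder κ.ord.ToType := noMaxOrder hκ.aleph0_le
  have hne : κ ≠ ℵ₀ := by
    rintro rfl
    exact not_isSingular_aleph0 hκ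
  obtain ⟨e⟩ : Nonempty (M ≃ κ.ord.ToType) := by
    rw [← Cardinal.eq, hcard, mk_toType, card_ord]
  refine .of_filtration (I := s) (κ := κ) (c := fun i => max (max #s ℵ₀) #(Iio i.1))
    (fun i k hik => max_le_max le_rfl (mk_le_mk_of_subset (Iio_subset_Iio hik)))
    (fun i => (le_max_right _ _).trans (le_max_left _ _))
    (fun i => (le_max_left _ _).trans (le_max_left _ _))
    (fun i => hκ.isSuccLimit.succ_lt (max_lt (max_lt (hscard ▸ hκ.cof_ord_lt)
      (hκ.aleph0_le.lt_of_ne' hne)) ?_)) hfree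
    (fun i => e ⁻¹' Iio i.1) (fun i => ?_) ?_
  · simpa using mk_Iio_lt i.1
  · exact (mk_preimage_of_injective _ _ e.injective).trans (le_max_right _ _)
  · refine eq_univ_of_forall fun x => ?_
    obtain ⟨y, hy⟩ := exists_gt (e x)
    obtain ⟨z, hz, hyz⟩ := hs y
    exact mem_iUnion.2 ⟨⟨z, hz⟩, hy.trans_le hyz⟩

end SingularCompactness

/-- Shelah's Singular Compactness Theorem (special case for Abelian groups):
if `κ` is a singular cardinal and `A` is a `κ`-free Abelian group of
cardinality `κ`, then `A` is a free `ℤ`-module. -/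
theorem singular_compactness_abelian
    (κ : Cardinal) (hinf : Cardinal.aleph0 ≤ κ) (hsing : κ.ord.cof < κ)
    (A : Type*) [AddCommGroup A] (hcard : Cardinal.mk A = κ)
    (hfree : ∀ B : AddSubgroup A, Cardinal.mk B < κ → Module.Free ℤ B) :
    Module.Free ℤ A := by
  exact .of_singular ⟨hinf, hsing.ne⟩ hcard fun U hU => hfree U.toAddSubgroup hU
end
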